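/- Assume ω = ‖x̃‖² > 0. Relabel the elements of c^{∖k} as c'_1 > c'_2 > … > c'_{m−1} and adopt the conventions c'_0 = +∞ and c'_m = 0. Define T(γ) as follows: T(γ) = 0 if |γ| ≤ S(ε_c); T(γ) = sign(γ)·c'_i if ω c'_i + S(c'_i − ε_c) ≤ |γ| ≤ ω c'_i + S(c'_i + ε_c) for some i ∈ {1,…,m−1}; T(γ) = (sign(γ)/ω)(|γ| − S(c'_i + ε_c)) if ω c'_i + S(c'_i + ε_c) < |γ| < ω c'_{i−1} + S(c'_{i−1} − ε_c) for some i ∈ {1,…,m}; and T(γ) = (sign(γ)/ω)(|γ| − S(c'_1 + ε_c)) if m ≥ 2 and |γ| ≥ ω c'_1 + S(c'_1 + ε_c). Then T(γ) is the unique minimizer over ℝ of the function G. -/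

import Mathlib

open Finset Filter

noncomputable section

/-- The sign of a real number, with the convention `sgn 0 = 1`. -/
def sgn (t : ℝ) : ℝ := if t < 0 then -1 else 1

/-- A permutation sorting the absolute values of `β` in nonincreasing order. -/
def sortPerm {p : ℕ} (β : Fin p → ℝ) : Equiv.Perm (Fin p) :=
  (Fin.revPerm).trans (Tuple.sort fun j => |β j|)

/-- The sorted ℓ₁ norm `J(β) = Σ_j λ_j |β|_(j)`. -/
def sortedL1 {p : ℕ} (lam β : Fin p → ℝ) : ℝ :=
  ∑ j, lam j * |β (sortPerm β j)|

/-- `β(z)`: the vector obtained from `β` by replacing entries of the cluster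
`{i : |β i| = ck}` by `sign(β i) * z`. -/
def cupd {p : ℕ} (β : Fin p → ℝ) (ck z : ℝ) : Fin p → ℝ :=
  fun i => if |β i| = ck then sgn (β i) * z else β i

/-- The partial sorted ℓ₁ norm `H(z) = J(β(z))`. -/
def Hfun {p : ℕ} (lam β : Fin p → ℝ) (ck : ℝ) (z : ℝ) : ℝ :=
  sortedL1 lam (cupd β ck z)

/-- `S(w) = Σ_{j ∈ C(w)} λ_{(j)⁻_w}`, where `C(w) = {j : |β(w)_j| = |w|}`. -/
def Sval {p : ℕ} (lam β : Fin p → ℝ) (ck : ℝ) (w : ℝ) : ℝ :=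
  ∑ j, if |cupd β ck w j| = |w| then lam ((sortPerm (cupd β ck w))⁻¹ j) else 0

/-- squared Euclidean norm -/
def sqnorm {n : ℕ} (v : Fin n → ℝ) : ℝ := ∑ i, (v i) ^ 2

/-- `G(z) = (1/2)‖y − Xβ(z)‖² + H(z)`. -/
def Gfun {n p : ℕ} (lam : Fin p → ℝ) (X : Matrix (Fin n) (Fin p) ℝ) (y : Fin n → ℝ)
    (β : Fin p → ℝ) (ck : ℝ) (z : ℝ) : ℝ :=
  (1/2) * sqnorm (fun i => y i - ∑ j, X i j * cupd β ck z j) + Hfun lam β ck z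

/-- `x̃ = Σ_{j ∈ C_k} sign(β_j) X_{:j}`. -/
def xtil {n p : ℕ} (X : Matrix (Fin n) (Fin p) ℝ) (β : Fin p → ℝ) (ck : ℝ) : Fin n → ℝ :=
  fun i => ∑ j, if |β j| = ck then sgn (β j) * X i j else 0

/-- `γ = c_k ω + x̃ᵀ r` where `r = y − Xβ` and `ω = ‖x̃‖²`. -/
def gam {n p : ℕ} (X : Matrix (Fin n) (Fin p) ℝ) (y : Fin n → ℝ) (β : Fin p → ℝ) (ck : ℝ) : ℝ :=
  ck * sqnorm (xtil X β ck) + ∑ i, xtil X β ck i * (y i - ∑ j, X i j * β j)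

end

/-!
Up to a constant, `G z = ω / 2 * z² - γ * z + H z`, where `H` is even and piecewise affine in `|z|`,
with kinks at `0` and at the values `c'_i`. By the rearrangement inequality, the permutation sorting
`β(w)` gives an affine minorant of `H` in `|z|`, of slope `S(w)`, which is exact on the closure of
the linear piece around `w`. Hence `sign(γ) * τ` is the unique minimizer as soon as `|γ| - ω * τ`
lies between the slopes of two minorants exact at `τ`, and each case of the definition of `T(γ)`
provides such slopes.
-/

/-- `t` is the unique minimizer of `f`. The second clause, that every minimizer equals `t`, is
phrased as in the main theorem. -/
def IsUniqueMinimizer {α : Type*} (f : α → ℝ) (t : α) : Prop :=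
  (∀ w, f t ≤ f w) ∧ ∀ z, (∀ w, f z ≤ f w) → z = t

theorem isUniqueMinimizer_of_forall_ne_lt {α : Type*} {f : α → ℝ} {t : α}
    (h : ∀ z, z ≠ t → f t < f z) : IsUniqueMinimizer f t := by
  refine ⟨fun w => ?_, fun z hz => ?_⟩
  · obtain rfl | hne := eq_or_ne w t
    exacts [le_rfl, (h w hne).le]
  · by_contra hne
    exact (h z hne).not_ge (hz t)

section Sign

theorem sgn_eq_one_or_eq_neg_one (x : ℝ) : sgn x = 1 ∨ sgn x = -1 := by
  unfold sgn
  split_ifs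
  exacts [.inr rfl, .inl rfl]

theorem abs_sgn_mul (x z : ℝ) : |sgn x * z| = |z| := by
  rcases sgn_eq_one_or_eq_neg_one x with h | h <;> simp [h]

theorem sgn_mul_self (x : ℝ) : sgn x * sgn x = 1 := by
  rcases sgn_eq_one_or_eq_neg_one x with h | h <;> simp [h]

theorem sgn_mul_abs (x : ℝ) : sgn x * |x| = x := by
  unfold sgn
  split_ifs with h
  · rw [abs_of_neg h, neg_one_mul, neg_neg]
  · rw [abs_of_nonneg (not_lt.mp h), one_mul]

end Sign

/-- `s` is a subgradient at `τ`, with respect to the variable `|z|`, of the function `h`: the affine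
function of `|z|` with slope `s` that agrees with `h` at `τ ≥ 0` lies below `h`. -/
def IsSubslope (h : ℝ → ℝ) (τ s : ℝ) : Prop :=
  ∀ z, h τ + s * (|z| - τ) ≤ h z

namespace IsSubslope

variable {h : ℝ → ℝ} {τ a b s : ℝ}

theorem of_le_of_le (ha : IsSubslope h τ a) (hb : IsSubslope h τ b) (has : a ≤ s) (hsb : s ≤ b) :
    IsSubslope h τ s := by
  intro z
  rcases le_total τ |z| with hz | hz
  · have := mul_le_mul_of_nonneg_right hsb (sub_nonneg.mpr hz)
    linarith [hb z]
  · have := mul_le_mul_of_nonpos_right has (sub_nonpos.mpr hz)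
    linarith [ha z]

theorem zero_of_le (hb : IsSubslope h 0 b) (hsb : s ≤ b) : IsSubslope h 0 s := by
  intro z
  have := mul_le_mul_of_nonneg_right hsb (abs_nonneg z)
  linarith [hb z]

theorem slope_mono {x y : ℝ} (hx : 0 ≤ x) (hxy : x < y) (ha : IsSubslope h x a)
    (hb : IsSubslope h y b) : a ≤ b := by
  have hay := ha y
  have hbx := hb x
  rw [abs_of_nonneg (hx.trans hxy.le)] at hay
  rw [abs_of_nonneg hx] at hbx
  refine le_of_mul_le_mul_right ?_ (sub_pos.mpr hxy)
  linarith

end IsSubslope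

theorem isUniqueMinimizer_quadratic_add {h : ℝ → ℝ} (h_even : h.Even) {ω γ τ : ℝ} (C : ℝ)
    (hω : 0 < ω) (hτ : ω * τ ≤ |γ|) (hs : IsSubslope h τ (|γ| - ω * τ)) :
    IsUniqueMinimizer (fun z => ω / 2 * z ^ 2 - γ * z + h z + C) (sgn γ * τ) := by
  refine isUniqueMinimizer_of_forall_ne_lt fun z hz => ?_
  have h_sgn : h (sgn γ * τ) = h τ := by
    rcases sgn_eq_one_or_eq_neg_one γ with hγ | hγ <;> simp [hγ, h_even τ]
  have h_growth : 0 < ω / 2 * (z - sgn γ * τ) ^ 2 := by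
    have := sub_ne_zero.mpr hz
    positivity
  have h_linear : (|γ| - ω * τ) * (sgn γ * z - τ) ≤ h z - h τ :=
    calc (|γ| - ω * τ) * (sgn γ * z - τ)
        ≤ (|γ| - ω * τ) * (|z| - τ) := by
          refine mul_le_mul_of_nonneg_left ?_ (sub_nonneg.mpr hτ)
          linarith [le_abs_self (sgn γ * z), abs_sgn_mul γ z]
      _ ≤ h z - h τ := by linarith [hs z]
  have h_expand : ω / 2 * z ^ 2 - γ * z - (ω / 2 * (sgn γ * τ) ^ 2 - γ * (sgn γ * τ)) =
      ω / 2 * (z - sgn γ * τ) ^ 2 - (|γ| - ω * τ) * (sgn γ * z - τ) := by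
    linear_combination (z - sgn γ * τ) * sgn_mul_abs γ +
      (|γ| * τ - ω * τ ^ 2) * sgn_mul_self γ
  rw [h_sgn]
  linarith

/-- No point of `K` is equal to `w` or lies strictly between `w` and `τ`. For finite `K` this says
that `τ` is in the closure of the component of the complement of `K` that contains `w`. -/
def InSamePiece (K : Set ℝ) (w τ : ℝ) : Prop :=
  ∀ x ∈ K, (x < w ∧ x ≤ τ) ∨ (w < x ∧ τ ≤ x)

theorem InSamePiece.le_of_le {K : Set ℝ} {w τ x : ℝ} (h : InSamePiece K w τ) (hx : x ∈ K)
    (hxw : x ≤ w) : x ≤ τ :=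
  (h x hx).elim And.right fun h' => absurd h'.1 hxw.not_gt

/-- Any two distinct points of `K` are more than `ε` apart. -/
def GapsExceed (ε : ℝ) (K : Set ℝ) : Prop :=
  ∀ x ∈ K, ∀ y ∈ K, x < y → x + ε < y

namespace GapsExceed

variable {ε x τ : ℝ} {K : Set ℝ}

theorem mono {L : Set ℝ} (hL : GapsExceed ε L) (h : K ⊆ L) : GapsExceed ε K :=
  fun x hx y hy => hL x (h hx) y (h hy)

theorem insert_zero_range {ι : Type*} {c : ι → ℝ} (hc : ∀ i, 0 ≤ c i)
    (h_sep : ∀ i j, i ≠ j → ε < |c i - c j|) (h_min : ∀ i, c i ≠ 0 → ε < c i) :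
    GapsExceed ε (insert 0 (Set.range c)) := by
  rintro _ (rfl | ⟨i, rfl⟩) _ (rfl | ⟨j, rfl⟩) hlt
  · exact absurd hlt (lt_irrefl 0)
  · rw [zero_add]
    exact h_min j hlt.ne'
  · exact absurd hlt (hc i).not_gt
  · have h := h_sep j i fun hji => hlt.ne' (congrArg c hji)
    rw [abs_of_pos (sub_pos.mpr hlt)] at h
    linarith

theorem inSamePiece_add (hK : GapsExceed ε K) (hε : 0 < ε) (hx : x ∈ K) (hxτ : x ≤ τ)
    (h_next : ∀ y ∈ K, x < y → τ ≤ y) : InSamePiece K (x + ε) τ := by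
  intro y hy
  rcases le_or_gt y x with hyx | hxy
  · exact .inl ⟨by linarith, hyx.trans hxτ⟩
  · exact .inr ⟨hK x hx y hy hxy, h_next y hy hxy⟩

theorem inSamePiece_sub (hK : GapsExceed ε K) (hε : 0 < ε) (hx : x ∈ K) (hτ : x - ε ≤ τ)
    (hτx : τ ≤ x) : InSamePiece K (x - ε) τ := by
  intro y hy
  rcases lt_or_ge y x with hyx | hxy
  · have := hK y hy x hx hyx
    exact .inl ⟨by linarith, by linarith⟩
  · exact .inr ⟨by linarith, hτx.trans hxy⟩

end GapsExceed

section SortedL1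

variable {p : ℕ} {lam : Fin p → ℝ}

theorem antitone_abs_comp_sortPerm (b : Fin p → ℝ) : Antitone fun j => |b (sortPerm b j)| :=
  fun _ _ hij => Tuple.monotone_sort (fun j => |b j|) (Fin.rev_le_rev.mpr hij)

theorem sum_mul_perm_le_of_monovary {ι : Type*} [Fintype ι] {f g : ι → ℝ} (σ ρ : Equiv.Perm ι)
    (h : Monovary f (g ∘ ρ)) : ∑ j, f j * g (σ j) ≤ ∑ j, f j * g (ρ j) := by
  simpa using h.sum_mul_comp_perm_le_sum_mul (σ := ρ⁻¹ * σ)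

theorem sum_mul_abs_le_sortedL1 (hlam : Antitone lam) (b : Fin p → ℝ) (σ : Equiv.Perm (Fin p)) :
    ∑ j, lam j * |b (σ j)| ≤ sortedL1 lam b :=
  sum_mul_perm_le_of_monovary σ (sortPerm b) (g := fun j => |b j|)
    (hlam.monovary (antitone_abs_comp_sortPerm b))

theorem sortedL1_eq_sum_of_antitone (hlam : Antitone lam) (b : Fin p → ℝ) (σ : Equiv.Perm (Fin p))
    (hσ : Antitone fun j => |b (σ j)|) : sortedL1 lam b = ∑ j, lam j * |b (σ j)| :=
  le_antisymm (sum_mul_perm_le_of_monovary (sortPerm b) σ (g := fun j => |b j|) (hlam.monovary hσ))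
    (sum_mul_abs_le_sortedL1 hlam b σ)

end SortedL1

/-- The possible kinks of `z ↦ H(z)` on `[0, ∞)`: the absolute values of the entries outside the
cluster, together with `0`. -/
def knots {p : ℕ} (β : Fin p → ℝ) (ck : ℝ) : Set ℝ :=
  insert 0 (Set.range (fun j => |β j|) \ {ck})

section Cluster

variable {p : ℕ} {lam β : Fin p → ℝ} {ck w τ : ℝ}

theorem zero_mem_knots : 0 ∈ knots β ck :=
  Set.mem_insert _ _

theorem abs_mem_knots {j : Fin p} (hj : |β j| ≠ ck) : |β j| ∈ knots β ck :=
  Set.mem_insert_of_mem _ ⟨⟨j, rfl⟩, hj⟩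

theorem nonneg_of_mem_knots {x : ℝ} (hx : x ∈ knots β ck) : 0 ≤ x := by
  obtain rfl | ⟨⟨j, rfl⟩, -⟩ := hx
  exacts [le_rfl, abs_nonneg _]

theorem abs_cupd (β : Fin p → ℝ) (ck z : ℝ) (j : Fin p) :
    |cupd β ck z j| = if |β j| = ck then |z| else |β j| := by
  unfold cupd
  split_ifs
  exacts [abs_sgn_mul _ _, rfl]

theorem abs_cupd_neg (β : Fin p → ℝ) (ck z : ℝ) (j : Fin p) :
    |cupd β ck (-z) j| = |cupd β ck z j| := by
  rw [abs_cupd, abs_cupd, abs_neg]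

theorem sortPerm_cupd_neg (β : Fin p → ℝ) (ck z : ℝ) :
    sortPerm (cupd β ck (-z)) = sortPerm (cupd β ck z) := by
  simp only [sortPerm, abs_cupd_neg]

theorem Hfun_even (lam β : Fin p → ℝ) (ck : ℝ) : (Hfun lam β ck).Even := fun z => by
  simp only [Hfun, sortedL1, sortPerm_cupd_neg, abs_cupd_neg]

theorem Sval_even (lam β : Fin p → ℝ) (ck : ℝ) : (Sval lam β ck).Even := fun z => by
  simp only [Sval, sortPerm_cupd_neg, abs_cupd_neg, abs_neg]

theorem Sval_nonneg (hlam : ∀ j, 0 ≤ lam j) (β : Fin p → ℝ) (ck w : ℝ) : 0 ≤ Sval lam β ck w :=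
  Finset.sum_nonneg fun _ _ => ite_nonneg (hlam _) le_rfl

theorem InSamePiece.abs_cupd_le_abs_cupd (h : InSamePiece (knots β ck) w τ) (hw : 0 ≤ w)
    {i j : Fin p} (hij : |cupd β ck w j| ≤ |cupd β ck w i|) :
    |cupd β ck τ j| ≤ |cupd β ck τ i| := by
  have hτ : 0 ≤ τ := h.le_of_le zero_mem_knots hw
  simp only [abs_cupd, abs_of_nonneg hw, abs_of_nonneg hτ] at hij ⊢
  split_ifs at hij ⊢ with hj hi hi
  · exact le_rfl
  · rcases h _ (abs_mem_knots hi) with h' | h' <;> linarith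
  · rcases h _ (abs_mem_knots hj) with h' | h' <;> linarith
  · exact hij

theorem sum_mul_abs_cupd (lam β : Fin p → ℝ) (ck z τ : ℝ) (σ : Equiv.Perm (Fin p)) :
    ∑ j, lam j * |cupd β ck z (σ j)| =
      ∑ j, lam j * |cupd β ck τ (σ j)| +
        (∑ j, if |β (σ j)| = ck then lam j else 0) * (|z| - |τ|) := by
  rw [Finset.sum_mul, ← Finset.sum_add_distrib]
  refine Finset.sum_congr rfl fun j _ => ?_
  rw [abs_cupd, abs_cupd]
  split_ifs <;> ring

theorem Sval_eq_sum_sortPerm (hw : ∀ j, |β j| ≠ ck → |β j| ≠ |w|) :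
    Sval lam β ck w = ∑ j, if |β (sortPerm (cupd β ck w) j)| = ck then lam j else 0 := by
  unfold Sval
  rw [← Equiv.sum_comp (sortPerm (cupd β ck w))]
  refine Finset.sum_congr rfl fun j _ => ?_
  rw [Equiv.Perm.inv_def, Equiv.symm_apply_apply, abs_cupd]
  by_cases hj : |β (sortPerm (cupd β ck w) j)| = ck
  · simp only [hj, if_true]
  · simp only [hj, hw _ hj, if_false]

theorem InSamePiece.isSubslope_Sval (h : InSamePiece (knots β ck) w τ) (hlam : Antitone lam)
    (hw : 0 ≤ w) : IsSubslope (Hfun lam β ck) τ (Sval lam β ck w) := by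
  intro z
  have hτ : 0 ≤ τ := h.le_of_le zero_mem_knots hw
  have h_off : ∀ j, |β j| ≠ ck → |β j| ≠ |w| := fun j hj => by
    rw [abs_of_nonneg hw]
    exact (h _ (abs_mem_knots hj)).elim (fun h' => h'.1.ne) fun h' => h'.1.ne'
  have h_sorts : Antitone fun j => |cupd β ck τ (sortPerm (cupd β ck w) j)| := fun _ _ hij =>
    h.abs_cupd_le_abs_cupd hw (antitone_abs_comp_sortPerm (cupd β ck w) hij)
  calc Hfun lam β ck τ + Sval lam β ck w * (|z| - τ)
      = ∑ j, lam j * |cupd β ck z (sortPerm (cupd β ck w) j)| := by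
        rw [Hfun, sortedL1_eq_sum_of_antitone hlam _ _ h_sorts, Sval_eq_sum_sortPerm h_off,
          sum_mul_abs_cupd lam β ck z τ, abs_of_nonneg hτ]
    _ ≤ Hfun lam β ck z := sum_mul_abs_le_sortedL1 hlam _ _

end Cluster

section Knots

variable {p : ℕ} {lam β : Fin p → ℝ} {ck ε x τ : ℝ}

theorem isSubslope_Sval_add (hlam : Antitone lam) (hε : 0 < ε) (hK : GapsExceed ε (knots β ck))
    (hx : x ∈ knots β ck) (hxτ : x ≤ τ) (h_next : ∀ y ∈ knots β ck, x < y → τ ≤ y) :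
    IsSubslope (Hfun lam β ck) τ (Sval lam β ck (x + ε)) :=
  (hK.inSamePiece_add hε hx hxτ h_next).isSubslope_Sval hlam
    (add_nonneg (nonneg_of_mem_knots hx) hε.le)

theorem isSubslope_Sval_sub (hlam : Antitone lam) (hε : 0 < ε) (hK : GapsExceed ε (knots β ck))
    (hx : x ∈ knots β ck) (hx_pos : 0 < x) (hτ : x - ε ≤ τ) (hτx : τ ≤ x) :
    IsSubslope (Hfun lam β ck) τ (Sval lam β ck (x - ε)) := by
  have hεx := hK 0 zero_mem_knots x hx hx_pos
  exact (hK.inSamePiece_sub hε hx hτ hτx).isSubslope_Sval hlam (by linarith)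

theorem Sval_sub_le_Sval_add (hlam : Antitone lam) (hε : 0 < ε) (hK : GapsExceed ε (knots β ck))
    {x' : ℝ} (hx : x ∈ knots β ck) (hx' : x' ∈ knots β ck) (hxx' : x ≤ x')
    (h_next : ∀ y ∈ knots β ck, x < y → x' ≤ y) :
    Sval lam β ck (x' - ε) ≤ Sval lam β ck (x + ε) := by
  rcases (nonneg_of_mem_knots hx').eq_or_lt with rfl | hx'_pos
  · obtain rfl : x = 0 := le_antisymm hxx' (nonneg_of_mem_knots hx)
    rw [zero_sub, zero_add, Sval_even]
  · have hεx' := hK 0 zero_mem_knots x' hx' hx'_pos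
    exact IsSubslope.slope_mono (by linarith) (sub_lt_self x' hε)
      (isSubslope_Sval_sub hlam hε hK hx' hx'_pos le_rfl (by linarith))
      (isSubslope_Sval_add hlam hε hK hx hxx' h_next)

end Knots

section Objective

variable {n p : ℕ} {lam : Fin p → ℝ} {X : Matrix (Fin n) (Fin p) ℝ} {y : Fin n → ℝ}
  {β : Fin p → ℝ} {ck ε x τ : ℝ}

theorem sqnorm_add_mul (u v : Fin n → ℝ) (a : ℝ) :
    sqnorm (fun i => u i + a * v i) = sqnorm u + 2 * a * ∑ i, v i * u i + a ^ 2 * sqnorm v := by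
  simp only [sqnorm, Finset.mul_sum, ← Finset.sum_add_distrib]
  exact Finset.sum_congr rfl fun i _ => by ring

theorem sub_sum_mul_cupd (X : Matrix (Fin n) (Fin p) ℝ) (y : Fin n → ℝ) (β : Fin p → ℝ)
    (ck z : ℝ) (i : Fin n) :
    y i - ∑ j, X i j * cupd β ck z j = (y i - ∑ j, X i j * β j) + (ck - z) * xtil X β ck i := by
  have h_term : ∀ j, X i j * cupd β ck z j =
      X i j * β j - (ck - z) * if |β j| = ck then sgn (β j) * X i j else 0 := by
    intro j
    unfold cupd
    split_ifs with hj
    · have hβ := sgn_mul_abs (β j)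
      rw [hj] at hβ
      linear_combination X i j * hβ
    · ring
  simp only [h_term, Finset.sum_sub_distrib, ← Finset.mul_sum, xtil]
  ring

theorem Gfun_eq_quadratic_add_Hfun (lam : Fin p → ℝ) (X : Matrix (Fin n) (Fin p) ℝ)
    (y : Fin n → ℝ) (β : Fin p → ℝ) (ck z : ℝ) :
    Gfun lam X y β ck z =
      sqnorm (xtil X β ck) / 2 * z ^ 2 - gam X y β ck * z + Hfun lam β ck z +
        1 / 2 * sqnorm (fun i => y i - ∑ j, X i j * cupd β ck 0 j) := by
  simp only [Gfun, sub_sum_mul_cupd, sqnorm_add_mul, gam]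
  ring

theorem isUniqueMinimizer_Gfun (hω : 0 < sqnorm (xtil X β ck))
    (hτ : sqnorm (xtil X β ck) * τ ≤ |gam X y β ck|)
    (hs : IsSubslope (Hfun lam β ck) τ (|gam X y β ck| - sqnorm (xtil X β ck) * τ)) :
    IsUniqueMinimizer (Gfun lam X y β ck) (sgn (gam X y β ck) * τ) := by
  rw [funext (Gfun_eq_quadratic_add_Hfun lam X y β ck)]
  exact isUniqueMinimizer_quadratic_add (Hfun_even lam β ck) _ hω hτ hs

theorem isUniqueMinimizer_Gfun_zero (hlam : Antitone lam) (hε : 0 < ε)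
    (hK : GapsExceed ε (knots β ck)) (hω : 0 < sqnorm (xtil X β ck))
    (hγ : |gam X y β ck| ≤ Sval lam β ck ε) : IsUniqueMinimizer (Gfun lam X y β ck) 0 := by
  have h_slope : IsSubslope (Hfun lam β ck) 0 (Sval lam β ck (0 + ε)) :=
    isSubslope_Sval_add hlam hε hK zero_mem_knots le_rfl fun _ _ hy => hy.le
  rw [zero_add] at h_slope
  simpa using isUniqueMinimizer_Gfun (X := X) (y := y) hω (by simp)
    (h_slope.zero_of_le (by simpa using hγ))

theorem isUniqueMinimizer_Gfun_knot (hlam : Antitone lam) (hlam_nonneg : ∀ j, 0 ≤ lam j)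
    (hε : 0 < ε) (hK : GapsExceed ε (knots β ck)) (hω : 0 < sqnorm (xtil X β ck))
    (hx : x ∈ knots β ck)
    (h_lower : sqnorm (xtil X β ck) * x + Sval lam β ck (x - ε) ≤ |gam X y β ck|)
    (h_upper : |gam X y β ck| ≤ sqnorm (xtil X β ck) * x + Sval lam β ck (x + ε)) :
    IsUniqueMinimizer (Gfun lam X y β ck) (sgn (gam X y β ck) * x) := by
  rcases (nonneg_of_mem_knots hx).eq_or_lt with rfl | hx_pos
  · rw [mul_zero, zero_add, zero_add] at h_upper
    rw [mul_zero]
    exact isUniqueMinimizer_Gfun_zero hlam hε hK hω h_upper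
  · have h_left := isSubslope_Sval_sub hlam hε hK hx hx_pos (sub_le_self x hε.le) le_rfl
    have h_right := isSubslope_Sval_add hlam hε hK hx le_rfl fun _ _ hy => hy.le
    exact isUniqueMinimizer_Gfun hω (by linarith [Sval_nonneg hlam_nonneg β ck (x - ε)])
      (h_left.of_le_of_le h_right (by linarith) (by linarith))

theorem isUniqueMinimizer_Gfun_piece (hlam : Antitone lam) (hlam_nonneg : ∀ j, 0 ≤ lam j)
    (hε : 0 < ε) (hK : GapsExceed ε (knots β ck)) (hω : 0 < sqnorm (xtil X β ck))
    (hx : x ∈ knots β ck)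
    (h_lower : sqnorm (xtil X β ck) * x + Sval lam β ck (x + ε) ≤ |gam X y β ck|)
    (h_upper : ∀ x' ∈ knots β ck, x < x' →
      |gam X y β ck| ≤ sqnorm (xtil X β ck) * x' + Sval lam β ck (x + ε)) :
    IsUniqueMinimizer (Gfun lam X y β ck)
      (sgn (gam X y β ck) / sqnorm (xtil X β ck) * (|gam X y β ck| - Sval lam β ck (x + ε))) := by
  set ω := sqnorm (xtil X β ck)
  set s := Sval lam β ck (x + ε)
  set τ := (|gam X y β ck| - s) / ω with hτ
  have h_stationary : |gam X y β ck| - ω * τ = s := by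
    rw [hτ, mul_div_cancel₀ _ hω.ne', sub_sub_cancel]
  have hxτ : x ≤ τ := (le_div_iff₀' hω).mpr (by linarith)
  have hτ_next : ∀ x' ∈ knots β ck, x < x' → τ ≤ x' := fun x' hx' hlt =>
    (div_le_iff₀' hω).mpr (by linarith [h_upper x' hx' hlt])
  have hs_nonneg : 0 ≤ s := Sval_nonneg hlam_nonneg β ck (x + ε)
  rw [div_mul_eq_mul_div, mul_div_assoc]
  refine isUniqueMinimizer_Gfun hω (by linarith) ?_
  rw [h_stationary]
  exact isSubslope_Sval_add hlam hε hK hx hxτ hτ_next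

theorem isUniqueMinimizer_Gfun_between (hlam : Antitone lam) (hlam_nonneg : ∀ j, 0 ≤ lam j)
    (hε : 0 < ε) (hK : GapsExceed ε (knots β ck)) (hω : 0 < sqnorm (xtil X β ck)) {x' : ℝ}
    (hx : x ∈ knots β ck) (hx' : x' ∈ knots β ck) (hxx' : x ≤ x')
    (h_next : ∀ y ∈ knots β ck, x < y → x' ≤ y)
    (h_lower : sqnorm (xtil X β ck) * x + Sval lam β ck (x + ε) ≤ |gam X y β ck|)
    (h_upper : |gam X y β ck| ≤ sqnorm (xtil X β ck) * x' + Sval lam β ck (x' - ε)) :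
    IsUniqueMinimizer (Gfun lam X y β ck)
      (sgn (gam X y β ck) / sqnorm (xtil X β ck) * (|gam X y β ck| - Sval lam β ck (x + ε))) := by
  refine isUniqueMinimizer_Gfun_piece hlam hlam_nonneg hε hK hω hx h_lower fun z hz hxz => ?_
  have h_slopes := Sval_sub_le_Sval_add hlam hε hK hx hx' hxx' h_next
  have h_mul := mul_le_mul_of_nonneg_left (h_next z hz hxz) hω.le
  linarith

theorem isUniqueMinimizer_Gfun_above (hlam : Antitone lam) (hlam_nonneg : ∀ j, 0 ≤ lam j)
    (hε : 0 < ε) (hK : GapsExceed ε (knots β ck)) (hω : 0 < sqnorm (xtil X β ck))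
    (hx : IsGreatest (knots β ck) x)
    (h_lower : sqnorm (xtil X β ck) * x + Sval lam β ck (x + ε) ≤ |gam X y β ck|) :
    IsUniqueMinimizer (Gfun lam X y β ck)
      (sgn (gam X y β ck) / sqnorm (xtil X β ck) * (|gam X y β ck| - Sval lam β ck (x + ε))) :=
  isUniqueMinimizer_Gfun_piece hlam hlam_nonneg hε hK hω hx.1 h_lower fun _ hx' hlt =>
    absurd hlt (hx.2 hx').not_gt

end Objective

section Enumeration

variable {p m : ℕ} {β : Fin p → ℝ} {c : Fin m → ℝ} {k : Fin m} {cc : ℕ → ℝ}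

theorem gapsExceed_knots {ι : Type*} {c : ι → ℝ} {ck ε : ℝ} (hc : ∀ i, 0 ≤ c i)
    (h_cover : ∀ j, ∃ i, |β j| = c i) (h_sep : ∀ i j, i ≠ j → ε < |c i - c j|)
    (h_min : ∀ i, c i ≠ 0 → ε < c i) : GapsExceed ε (knots β ck) := by
  refine (GapsExceed.insert_zero_range hc h_sep h_min).mono (Set.insert_subset_insert ?_)
  exact Set.sdiff_subset.trans (Set.range_subset_iff.mpr fun j => (h_cover j).imp fun _ => Eq.symm)

theorem knots_eq_image_Icc (hm : 0 < m) (hc : Function.Injective c)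
    (h_attain : ∀ i, ∃ j, |β j| = c i) (h_cover : ∀ j, ∃ i, |β j| = c i)
    (h_cc : ∀ x : ℝ, (∃ i, i ≠ k ∧ x = c i) ↔ ∃ i : ℕ, 1 ≤ i ∧ i ≤ m - 1 ∧ x = cc i)
    (h_last : cc m = 0) : knots β (c k) = cc '' Set.Icc 1 m := by
  have h_range : Set.range (fun j => |β j|) = Set.range c :=
    Set.Subset.antisymm (Set.range_subset_iff.mpr fun j => (h_cover j).imp fun _ => Eq.symm)
      (Set.range_subset_iff.mpr h_attain)
  have h_image : c '' {k}ᶜ = cc '' Set.Icc 1 (m - 1) := by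
    ext x
    simpa [and_assoc, eq_comm] using h_cc x
  have h_Icc : Set.Icc 1 m = insert m (Set.Icc 1 (m - 1)) := by
    ext i
    simp only [Set.mem_Icc, Set.mem_insert_iff]
    omega
  rw [knots, h_range, ← Set.image_singleton, ← Set.image_compl_eq_range_sdiff_image hc, h_image,
    h_Icc, Set.image_insert_eq, h_last]

theorem antitoneOn_Icc_of_strict_of_last_le
    (h_anti : ∀ i j : ℕ, 1 ≤ i → i < j → j ≤ m - 1 → cc j < cc i)
    (h_last : ∀ i ∈ Set.Icc 1 m, cc m ≤ cc i) : AntitoneOn cc (Set.Icc 1 m) := by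
  intro i hi j hj hij
  obtain rfl | hjm := hj.2.eq_or_lt
  · exact h_last i hi
  · obtain rfl | hlt := hij.eq_or_lt
    exacts [le_rfl, (h_anti i j hi.1 hlt (by omega)).le]

theorem apply_sub_one_le_of_lt_of_antitoneOn {α : Type*} [Preorder α] {f : ℕ → α} {s : Set ℕ}
    (hf : AntitoneOn f s) (hs : s.OrdConnected) {i l : ℕ} (hi : i ∈ s) (hl : l ∈ s)
    (hil : f i < f l) : f (i - 1) ≤ f l := by
  have hl_pred : l ≤ i - 1 := Nat.le_sub_one_of_lt (lt_of_not_ge fun h => hil.not_ge (hf hi hl h))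
  exact hf hl (hs.out hl hi ⟨hl_pred, Nat.sub_le i 1⟩) hl_pred

end Enumeration

/-- SLOPE thresholding operator: assume `ω = ‖x̃‖² > 0`. The elements of
`c^{∖k}` are relabelled as `cc 1 > cc 2 > … > cc (m−1)` with the conventions
`cc 0 = +∞` (encoded by removing the corresponding bound) and `cc m = 0`. Whenever `t`
equals the value `T(γ)` prescribed by one of the cases (case 3 for `i ∈ {1,…,m}` is split
into `i ∈ {2,…,m}` and `i = 1`, the latter having no upper bound since `cc 0 = +∞`),
`t` is the unique minimizer of `G` over ℝ. -/
theorem slope_thresholding_operator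
    {n p m : ℕ} (hn : 0 < n) (hp : 0 < p) (hm : 0 < m)
    (lam : Fin p → ℝ)
    (hlam_mono : ∀ i j : Fin p, i ≤ j → lam j ≤ lam i)
    (hlam_nonneg : ∀ j, 0 ≤ lam j)
    (β : Fin p → ℝ) (c : Fin m → ℝ)
    (hc_anti : StrictAnti c) (hc_nonneg : ∀ i, 0 ≤ c i)
    (h_attain : ∀ i, ∃ j, |β j| = c i)
    (h_cover : ∀ j, ∃ i, |β j| = c i)
    (k : Fin m)
    (ε : ℝ) (hε_pos : 0 < ε)
    (hε_sep : ∀ i j, i ≠ j → ε < |c i - c j|)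
    (hε_min : ∀ i, c i ≠ 0 → ε < c i)
    (X : Matrix (Fin n) (Fin p) ℝ) (y : Fin n → ℝ)
    (hω : 0 < sqnorm (xtil X β (c k)))
    (cc : ℕ → ℝ)
    (h_cc_anti : ∀ i j : ℕ, 1 ≤ i → i < j → j ≤ m - 1 → cc j < cc i)
    (h_cc_range : ∀ x : ℝ, (∃ i, i ≠ k ∧ x = c i) ↔ (∃ i : ℕ, 1 ≤ i ∧ i ≤ m - 1 ∧ x = cc i))
    (h_cc_m : cc m = 0)
    (t : ℝ)
    (ht :
      -- case 1
      (|gam X y β (c k)| ≤ Sval lam β (c k) ε ∧ t = 0) ∨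
      -- case 2: t = sign(γ) cc i for some i ∈ {1,…,m−1}
      (∃ i : ℕ, 1 ≤ i ∧ i ≤ m - 1 ∧
        sqnorm (xtil X β (c k)) * cc i + Sval lam β (c k) (cc i - ε) ≤ |gam X y β (c k)| ∧
        |gam X y β (c k)| ≤ sqnorm (xtil X β (c k)) * cc i + Sval lam β (c k) (cc i + ε) ∧
        t = sgn (gam X y β (c k)) * cc i) ∨
      -- case 3 for i ∈ {2,…,m}
      (∃ i : ℕ, 2 ≤ i ∧ i ≤ m ∧
        sqnorm (xtil X β (c k)) * cc i + Sval lam β (c k) (cc i + ε) < |gam X y β (c k)| ∧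
        |gam X y β (c k)| <
          sqnorm (xtil X β (c k)) * cc (i - 1) + Sval lam β (c k) (cc (i - 1) - ε) ∧
        t = sgn (gam X y β (c k)) / sqnorm (xtil X β (c k)) *
              (|gam X y β (c k)| - Sval lam β (c k) (cc i + ε))) ∨
      -- case 3 for i = 1 (upper bound removed since cc 0 = +∞)
      (sqnorm (xtil X β (c k)) * cc 1 + Sval lam β (c k) (cc 1 + ε) < |gam X y β (c k)| ∧
        t = sgn (gam X y β (c k)) / sqnorm (xtil X β (c k)) *
              (|gam X y β (c k)| - Sval lam β (c k) (cc 1 + ε))) ∨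
      -- case 4
      (2 ≤ m ∧
        sqnorm (xtil X β (c k)) * cc 1 + Sval lam β (c k) (cc 1 + ε) ≤ |gam X y β (c k)| ∧
        t = sgn (gam X y β (c k)) / sqnorm (xtil X β (c k)) *
              (|gam X y β (c k)| - Sval lam β (c k) (cc 1 + ε)))) :
    (∀ w : ℝ, Gfun lam X y β (c k) t ≤ Gfun lam X y β (c k) w) ∧
    (∀ z : ℝ, (∀ w : ℝ, Gfun lam X y β (c k) z ≤ Gfun lam X y β (c k) w) → z = t) := by
  have hlam : Antitone lam := fun i j => hlam_mono i j
  have hK := gapsExceed_knots hc_nonneg h_cover hε_sep hε_min (ck := c k)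
  have h_knots := knots_eq_image_Icc hm hc_anti.injective h_attain h_cover h_cc_range h_cc_m
  have h_mem : ∀ i ∈ Set.Icc 1 m, cc i ∈ knots β (c k) := fun i hi => h_knots ▸ ⟨i, hi, rfl⟩
  have h_anti : AntitoneOn cc (Set.Icc 1 m) := antitoneOn_Icc_of_strict_of_last_le h_cc_anti
    fun i hi => h_cc_m.trans_le (nonneg_of_mem_knots (h_mem i hi))
  have h_greatest : IsGreatest (knots β (c k)) (cc 1) :=
    h_knots ▸ h_anti.map_isLeast (isLeast_Icc hm)
  rcases ht with ⟨hγ, rfl⟩ | ⟨i, hi, him, hγl, hγu, rfl⟩ | ⟨i, hi, him, hγl, hγu, rfl⟩ |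
    ⟨hγ, rfl⟩ | ⟨-, hγ, rfl⟩
  · exact isUniqueMinimizer_Gfun_zero hlam hε_pos hK hω hγ
  · exact isUniqueMinimizer_Gfun_knot hlam hlam_nonneg hε_pos hK hω
      (h_mem i ⟨hi, by omega⟩) hγl hγu
  · have hi_mem : i ∈ Set.Icc 1 m := ⟨by omega, him⟩
    have hi_pred : i - 1 ∈ Set.Icc 1 m := ⟨by omega, by omega⟩
    refine isUniqueMinimizer_Gfun_between hlam hlam_nonneg hε_pos hK hω (h_mem i hi_mem)
      (h_mem _ hi_pred) (h_anti hi_pred hi_mem (Nat.sub_le i 1)) ?_ hγl.le hγu.le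
    rw [h_knots, Set.forall_mem_image]
    exact fun _ => apply_sub_one_le_of_lt_of_antitoneOn h_anti Set.ordConnected_Icc hi_mem
  · exact isUniqueMinimizer_Gfun_above hlam hlam_nonneg hε_pos hK hω h_greatest hγ.le
  · exact isUniqueMinimizer_Gfun_above hlam hlam_nonneg hε_pos hK hω h_greatest hγ
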